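/- Let Ω be a (3,10,40)-graph with diam(Ω) = 2 and let S be a vertex cut of Ω of minimum cardinality (i.e., S is a vertex cut and no vertex cut of Ω has fewer vertices than S). Then S = N(v) for some vertex v of Ω. -/

import Mathlib

/-- A vertex cut of a graph on `Fin n`: a set of vertices whose deletion leaves a
disconnected graph. -/
def IsVertexCut {n : ℕ} (G : SimpleGraph (Fin n)) (S : Finset (Fin n)) : Prop :=
  ¬ (G.induce ((↑S : Set (Fin n))ᶜ)).Connected

/-!
Let `S` be a minimum vertex cut of a triangle-free graph with independence number `α`, diameter `2`
and many vertices. Neighbourhoods are independent cuts, so `#S ≤ deg v ≤ α` for every `v`, and it is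
enough to show `N(v) ⊆ S` for some `v`. Otherwise both sides of the cut contain an edge. An edge
`bb'` on the side opposite to `a` forces two neighbours of `a` in `S`, since `a` shares a neighbour
with `b` and with `b'`, and no vertex is adjacent to both. Counting the edges between `S` and its
complement now bounds `#S` from below. On the other hand `b` and `b'` have disjoint neighbourhoods
in `S`, so one of them has at least `#S / 2` neighbours on its own side; together with the
neighbours of `a` on the side of `a` they form an independent set. For `#S` that large this leaves
`a` at least three neighbours in `S`, and counting the edges again makes `#S` larger than `α`.
-/

open Finset

section

variable {V : Type*} {G : SimpleGraph V}

lemma indepNum_lt_of_compl_cliqueFree {k : ℕ} (h : Gᶜ.CliqueFree k) : G.indepNum < k := by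
  obtain ⟨I, hI⟩ := G.exists_isNIndepSet_indepNum
  by_contra! hk
  exact h.mono hk I (G.isNClique_compl.2 hI)

lemma commonNeighbors_nonempty_of_ediam_le_two (hdiam : G.ediam ≤ 2) {x y : V} (hne : x ≠ y)
    (hxy : ¬ G.Adj x y) : (G.commonNeighbors x y).Nonempty := by
  have h0 : G.edist x y ≠ 0 := mt SimpleGraph.edist_eq_zero_iff.1 hne
  have h1 : G.edist x y ≠ 1 := mt SimpleGraph.edist_eq_one_iff_adj.1 hxy
  have h2 : G.edist x y = 2 := by
    have hle : G.edist x y ≤ 2 := SimpleGraph.edist_le_ediam.trans hdiam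
    obtain ⟨d, hd, hd2⟩ := ENat.le_natCast_iff.1 hle
    interval_cases d <;> simp_all
  exact (SimpleGraph.edist_eq_two_iff.1 h2).2.2

lemma not_connected_induce_compl_neighborSet {v w : V} (hvw : Gᶜ.Adj v w) :
    ¬ (G.induce (G.neighborSet v)ᶜ).Connected := by
  intro hconn
  obtain ⟨hne, hvw⟩ := (G.compl_adj v w).1 hvw
  let v' : ↥(G.neighborSet v)ᶜ := ⟨v, G.loopless.irrefl v⟩
  have : Nontrivial ↥(G.neighborSet v)ᶜ := ⟨v', ⟨w, hvw⟩, fun h ↦ hne (congrArg Subtype.val h)⟩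
  exact hconn.preconnected.not_isIsolated v' fun u hu ↦ u.2 hu

lemma disjoint_neighborSet_of_adj (h3 : G.CliqueFree 3) {b b' : V} (hbb' : G.Adj b b') :
    Disjoint (G.neighborSet b) (G.neighborSet b') := by
  classical
  exact Set.disjoint_left.2 fun z hbz hb'z ↦
    h3 {b, b', z} (SimpleGraph.is3Clique_triple_iff.2 ⟨hbb', hbz, hb'z⟩)

section Separation

variable [Fintype V] [DecidableEq V]

/-- The sets `A` and `B` are the two sides of a separation of `G` by the vertex set `S`: they are
nonempty, they partition the complement of `S`, and no edge joins them. Each side may consist of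
several components of `G - S`. -/
structure IsSeparation (G : SimpleGraph V) (S A B : Finset V) : Prop where
  left_nonempty : A.Nonempty
  right_nonempty : B.Nonempty
  disjoint : Disjoint A B
  union_eq : A ∪ B = Sᶜ
  not_adj : ∀ a ∈ A, ∀ b ∈ B, ¬ G.Adj a b

lemma exists_isSeparation_of_not_connected {S : Finset V} {a : V}
    (hS : ¬ (G.induce (S : Set V)ᶜ).Connected) (ha : a ∉ S) :
    ∃ A B, IsSeparation G S A B ∧ a ∈ A := by
  classical
  let H := G.induce (S : Set V)ᶜ
  let a' : ↥(S : Set V)ᶜ := ⟨a, ha⟩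
  obtain ⟨b, hab⟩ : ∃ b, ¬ H.Reachable a' b := by
    by_contra! h
    exact hS (H.connected_iff_exists_forall_reachable.2 ⟨a', h⟩)
  let A : Finset V := {x | ∃ hx : x ∉ S, H.Reachable a' ⟨x, hx⟩}
  have hA {x : V} (hx : x ∉ S) : x ∈ A ↔ H.Reachable a' ⟨x, hx⟩ := by simp [A, hx]
  have hAS : A ⊆ Sᶜ := fun x hx ↦ by simpa using (mem_filter.1 hx).2.1
  have haA : a ∈ A := (hA ha).2 .rfl
  refine ⟨A, Sᶜ \ A, ⟨⟨a, haA⟩, ⟨b, ?_⟩, disjoint_sdiff, union_sdiff_of_subset hAS, ?_⟩, haA⟩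
  · exact mem_sdiff.2 ⟨mem_compl.2 b.2, fun h ↦ hab ((hA b.2).1 h)⟩
  · intro x hx y hy hxy
    obtain ⟨hyS, hyA⟩ := mem_sdiff.1 hy
    have hxS := mem_compl.1 (hAS hx)
    rw [mem_compl] at hyS
    have hxy' : H.Adj ⟨x, hxS⟩ ⟨y, hyS⟩ := hxy
    exact hyA ((hA hyS).2 (((hA hxS).1 hx).trans hxy'.reachable))

namespace IsSeparation

variable {S A B : Finset V} {a b : V}

lemma symm (h : IsSeparation G S A B) : IsSeparation G S B A where
  left_nonempty := h.right_nonempty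
  right_nonempty := h.left_nonempty
  disjoint := h.disjoint.symm
  union_eq := by rw [union_comm, h.union_eq]
  not_adj b hb a ha hba := h.not_adj a ha b hb hba.symm

lemma mem_left_of_adj (h : IsSeparation G S A B) (ha : a ∈ A) {w : V} (haw : G.Adj a w)
    (hw : w ∉ S) : w ∈ A := by
  have hAB : w ∈ A ∪ B := by simpa [h.union_eq] using hw
  exact (mem_union.1 hAB).resolve_right fun hB ↦ h.not_adj a ha w hB haw

lemma exists_mem_adj_adj (h : IsSeparation G S A B) (hdiam : G.ediam ≤ 2) (ha : a ∈ A)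
    (hb : b ∈ B) : ∃ z ∈ S, G.Adj a z ∧ G.Adj b z := by
  obtain ⟨z, haz, hbz⟩ := commonNeighbors_nonempty_of_ediam_le_two hdiam
    (disjoint_iff_ne.1 h.disjoint a ha b hb) (h.not_adj a ha b hb)
  refine ⟨z, ?_, haz, hbz⟩
  by_contra hz
  exact h.not_adj z (h.mem_left_of_adj ha haz hz) b hb hbz.symm

end IsSeparation

lemma exists_isSeparation_and_adj {S : Finset V} {a : V}
    (hS : ¬ (G.induce (S : Set V)ᶜ).Connected) (hout : ∀ v, ∃ w ∉ S, G.Adj v w) (ha : a ∉ S) :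
    ∃ A B, IsSeparation G S A B ∧ a ∈ A ∧ ∃ b ∈ B, ∃ b' ∈ B, G.Adj b b' := by
  obtain ⟨A, B, hsep, haA⟩ := exists_isSeparation_of_not_connected hS ha
  obtain ⟨b, hb⟩ := hsep.right_nonempty
  obtain ⟨b', hb'S, hbb'⟩ := hout b
  exact ⟨A, B, hsep, haA, b, hb, b', hsep.symm.mem_left_of_adj hb hbb' hb'S, hbb'⟩

end Separation

section Counting

variable [Fintype V] [DecidableRel G.Adj]

lemma degree_le_indepNum (h3 : G.CliqueFree 3) (v : V) : G.degree v ≤ G.indepNum :=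
  SimpleGraph.IsIndepSet.card_le_indepNum <| by
    simpa using G.isIndepSet_neighborSet_of_triangleFree h3 v

lemma not_connected_induce_compl_neighborFinset {v : V} (hv : G.degree v + 1 < Fintype.card V) :
    ¬ (G.induce (G.neighborFinset v : Set V)ᶜ).Connected := by
  classical
  have hpos : 0 < Gᶜ.degree v := by
    rw [SimpleGraph.degree_compl]
    omega
  obtain ⟨w, hvw⟩ := (Gᶜ.degree_pos_iff_exists_adj v).1 hpos
  rw [SimpleGraph.coe_neighborFinset]
  exact not_connected_induce_compl_neighborSet hvw

lemma exists_adj_notMem_of_ne_neighborFinset {S : Finset V} {v : V} (hcard : #S ≤ G.degree v)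
    (hne : S ≠ G.neighborFinset v) : ∃ w ∉ S, G.Adj v w := by
  by_contra! h
  refine hne (eq_of_subset_of_card_le (fun w hw ↦ ?_) hcard).symm
  by_contra hwS
  exact h w hwS ((G.mem_neighborFinset v w).1 hw)

variable [DecidableEq V]

lemma card_compl_mul_le_card_mul {S : Finset V} {m d : ℕ}
    (hm : ∀ v ∉ S, m ≤ #(G.neighborFinset v ∩ S)) (hd : ∀ v ∈ S, G.degree v ≤ d) :
    #Sᶜ * m ≤ #S * d := by
  refine card_mul_le_card_mul G.Adj (fun v hv ↦ ?_) (fun v hv ↦ ?_)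
  · convert hm v (mem_compl.1 hv) using 2
    ext w
    simp [bipartiteAbove, and_comm]
  · refine (card_le_card fun w hw ↦ ?_).trans (hd v hv)
    simpa using (mem_filter.1 hw).2.symm

lemma card_inter_add_card_inter_le_of_adj (h3 : G.CliqueFree 3) (S : Finset V) {b b' : V}
    (hbb' : G.Adj b b') : #(G.neighborFinset b ∩ S) + #(G.neighborFinset b' ∩ S) ≤ #S := by
  have hdisj : Disjoint (G.neighborFinset b) (G.neighborFinset b') := by
    simpa [← disjoint_coe] using disjoint_neighborSet_of_adj h3 hbb'
  rw [← card_union_of_disjoint (hdisj.mono inter_subset_left inter_subset_left)]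
  exact card_le_card (union_subset inter_subset_right inter_subset_right)

namespace IsSeparation

variable {S A B : Finset V} {a b b' : V}

lemma degree_le (h : IsSeparation G S A B) (ha : a ∈ A) :
    G.degree a ≤ #(G.neighborFinset a ∩ A) + #(G.neighborFinset a ∩ S) := by
  refine (card_le_card fun w hw ↦ ?_).trans (card_union_le _ _)
  have hwA := h.mem_left_of_adj ha ((G.mem_neighborFinset a w).1 hw)
  grind

lemma two_le_card_neighborFinset_inter (h : IsSeparation G S A B) (h3 : G.CliqueFree 3)
    (hdiam : G.ediam ≤ 2) (ha : a ∈ A) (hb : b ∈ B) (hb' : b' ∈ B) (hbb' : G.Adj b b') :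
    2 ≤ #(G.neighborFinset a ∩ S) := by
  obtain ⟨z, hzS, haz, hbz⟩ := h.exists_mem_adj_adj hdiam ha hb
  obtain ⟨z', hz'S, haz', hb'z'⟩ := h.exists_mem_adj_adj hdiam ha hb'
  have hzz' : z ≠ z' := (disjoint_neighborSet_of_adj h3 hbb').ne_of_mem hbz hb'z'
  exact one_lt_card.2 ⟨z, by simp [haz, hzS], z', by simp [haz', hz'S], hzz'⟩

lemma card_inter_add_card_inter_le_indepNum (h : IsSeparation G S A B) (h3 : G.CliqueFree 3)
    (a b : V) :
    #(G.neighborFinset a ∩ A) + #(G.neighborFinset b ∩ B) ≤ G.indepNum := by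
  rw [← card_union_of_disjoint (h.disjoint.mono inter_subset_right inter_subset_right)]
  refine SimpleGraph.IsIndepSet.card_le_indepNum ?_
  have hind := G.isIndepSet_neighborSet_of_triangleFree h3
  rw [coe_union, SimpleGraph.isIndepSet_iff, Set.pairwise_union]
  refine ⟨(hind a).mono (by simp), (hind b).mono (by simp), fun x hx y hy _ ↦ ?_⟩
  have hxy := h.not_adj x (mem_inter.1 hx).2 y (mem_inter.1 hy).2
  exact ⟨hxy, fun hyx ↦ hxy hyx.symm⟩

lemma three_mul_card_le (h : IsSeparation G S A B) (h3 : G.CliqueFree 3)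
    (hdeg : ∀ v, #S ≤ G.degree v) (ha : a ∈ A) (hb : b ∈ B) (hb' : b' ∈ B) (hbb' : G.Adj b b') :
    3 * #S ≤ 2 * (#(G.neighborFinset a ∩ S) + G.indepNum) := by
  have hS := card_inter_add_card_inter_le_of_adj h3 S hbb'
  have hab := h.card_inter_add_card_inter_le_indepNum h3 a b
  have hab' := h.card_inter_add_card_inter_le_indepNum h3 a b'
  have hdega := (hdeg a).trans (h.degree_le ha)
  have hdegb := (hdeg b).trans (h.symm.degree_le hb)
  have hdegb' := (hdeg b').trans (h.symm.degree_le hb')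
  omega

end IsSeparation

end Counting

end

lemma lt_of_succ_mul_div_lt {k n : ℕ} (h : (k + 1) * ((2 * k + 2) / 3) < 2 * n) : k < n := by
  obtain hk | hk := le_or_gt k 1
  · interval_cases k <;> omega
  · have hdiv : 2 ≤ (2 * k + 2) / 3 := by omega
    nlinarith

lemma two_mul_add_two_lt_three_mul {k s c d : ℕ}
    (h : (k + 1) * ((2 * k + 2) / 3) < 2 * (s + c)) (hd : d < k) (hc : c * 2 ≤ s * d) :
    2 * k + 2 < 3 * s := by
  have hlt : (2 * k + 2) / 3 < s := by nlinarith
  omega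

lemma lt_of_mul_three_le_mul {k s c d : ℕ}
    (h : (k + 1) * ((2 * k + 2) / 3) < 2 * (s + c)) (hd : d < k) (hc : c * 3 ≤ s * d) :
    d < s := by
  have hdiv : 2 * k ≤ 3 * ((2 * k + 2) / 3) := by omega
  by_contra! hs
  have hle : 3 * (s + c) ≤ k * (k + 1) := calc
    3 * (s + c) ≤ s * (d + 3) := by linarith
    _ ≤ d * (d + 3) := by gcongr
    _ ≤ k * (k + 1) := by nlinarith
  nlinarith

/-- The bound `hcard` is what turns the first count `2 * card V ≤ #S * (k + 1)` into
`(2 * k + 2) / 3 < #S`. For `k = 10` it reads `39 ≤ card V`. -/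
theorem stmt_19_general {V : Type*} [Fintype V] {G : SimpleGraph V} [DecidableRel G.Adj] {k : ℕ}
    (h3 : G.CliqueFree 3) (hk : Gᶜ.CliqueFree k)
    (hcard : (k + 1) * ((2 * k + 2) / 3) < 2 * Fintype.card V) (hdiam : G.diam = 2) {S : Finset V}
    (hcut : ¬ (G.induce (S : Set V)ᶜ).Connected)
    (hmin : ∀ T : Finset V, ¬ (G.induce (T : Set V)ᶜ).Connected → #S ≤ #T) :
    ∃ v, S = G.neighborFinset v := by
  classical
  have hediam : G.ediam ≤ 2 := ((ENat.toNat_eq_iff two_ne_zero).1 hdiam).le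
  have hα : G.indepNum < k := indepNum_lt_of_compl_cliqueFree hk
  have hdeg (v : V) : #S ≤ G.degree v := by
    have hv := degree_le_indepNum h3 v
    have hkV := lt_of_succ_mul_div_lt hcard
    exact hmin _ (not_connected_induce_compl_neighborFinset (by omega))
  by_contra! hne
  have hout (v : V) := exists_adj_notMem_of_ne_neighborFinset (hdeg v) (hne v)
  have hcount {m : ℕ} (hm : ∀ a ∉ S, m ≤ #(G.neighborFinset a ∩ S)) : #Sᶜ * m ≤ #S * G.indepNum :=
    card_compl_mul_le_card_mul hm fun v _ ↦ degree_le_indepNum h3 v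
  rw [← card_add_card_compl S] at hcard
  have htwo : ∀ a ∉ S, 2 ≤ #(G.neighborFinset a ∩ S) := fun a ha ↦ by
    obtain ⟨A, B, hsep, haA, b, hb, b', hb', hbb'⟩ := exists_isSeparation_and_adj hcut hout ha
    exact hsep.two_le_card_neighborFinset_inter h3 hediam haA hb hb' hbb'
  have hS : 2 * k + 2 < 3 * #S := two_mul_add_two_lt_three_mul hcard hα (hcount htwo)
  have hthree : ∀ a ∉ S, 3 ≤ #(G.neighborFinset a ∩ S) := fun a ha ↦ by
    obtain ⟨A, B, hsep, haA, b, hb, b', hb', hbb'⟩ := exists_isSeparation_and_adj hcut hout ha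
    have hle := hsep.three_mul_card_le h3 hdeg haA hb hb' hbb'
    omega
  obtain ⟨v, -⟩ : S.Nonempty := card_pos.1 (by omega)
  exact (lt_of_mul_three_le_mul hcard hα (hcount hthree)).not_ge
    ((hdeg v).trans (degree_le_indepNum h3 v))

/-- In a (3,10,40)-graph of diameter 2, every vertex cut of minimum
cardinality is the neighbourhood N(v) of some vertex v. -/
theorem stmt_19 (Ω : SimpleGraph (Fin 40)) [DecidableRel Ω.Adj]
    (h3 : Ω.CliqueFree 3) (h10 : Ωᶜ.CliqueFree 10)
    (hdiam : Ω.diam = 2) (S : Finset (Fin 40))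
    (hcut : IsVertexCut Ω S)
    (hmin : ∀ T : Finset (Fin 40), IsVertexCut Ω T → S.card ≤ T.card) :
    ∃ v : Fin 40, S = Ω.neighborFinset v := by
  exact stmt_19_general h3 h10 (by simp) hdiam hcut hmin
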